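/- Let q = p^r be a prime power with q ≡ 1 (mod 3), f(T) = T² + bT + c ∈ 𝔽_q[T] a monic quadratic polynomial irreducible over 𝔽_q, and F = 𝔽_q(x)[Y]/(Y³ − x·f(x)). Then 𝔽_q is the full field of constants of F: every element of F that is algebraic over 𝔽_q lies in (the canonical image of) 𝔽_q; equivalently, the integral closure of 𝔽_q in F equals 𝔽_q. -/

import Mathlib

set_option synthInstance.maxHeartbeats 400000

open Polynomial

/-- The rational function `x·f(x) = x(x² + bx + c)` in `𝔽_q(x)`. -/
noncomputable def xfx (Fq : Type*) [Field Fq] (b c : Fq) : RatFunc Fq :=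
  RatFunc.X * (RatFunc.X ^ 2 + RatFunc.C b * RatFunc.X + RatFunc.C c)

/-- The Kummer polynomial `Y³ − x·f(x)` over the rational function field `𝔽_q(x)`. -/
noncomputable def kummerPoly (Fq : Type*) [Field Fq] (b c : Fq) : Polynomial (RatFunc Fq) :=
  X ^ 3 - C (xfx Fq b c)

/-!
Over a simple root `a` of `u ∈ K[X]` the extension `Yⁿ = u(x)` of `K(x)` is totally ramified with
residue field `K`.  Concretely, Hensel's lemma solves `u(g) = tⁿ` with `g ∈ K⟦t⟧`, and `x ↦ g`,
`Y ↦ t` embeds `K(x)[Y]/(Yⁿ - u)`, a field by Eisenstein's criterion at `x - a`, into `K((t))`.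
Taking constant terms shows that `K` is algebraically closed in `K((t))`, hence in this subfield.
-/

theorem exists_aeval_eq_of_simple_root {K R : Type*} [Field K] [CommRing R] [Algebra K R]
    {I : Ideal R} [HenselianRing R I] {u : K[X]} {a : K} (hroot : u.IsRoot a)
    (hsimple : ¬(derivative u).IsRoot a) {s : R} (hs : s ∈ I) : ∃ g : R, aeval g u = s := by
  wlog hmonic : u.Monic generalizing u s
  · have hu : u ≠ 0 := by
      rintro rfl
      simp at hsimple
    have hlead : u.leadingCoeff⁻¹ ≠ 0 := inv_ne_zero (leadingCoeff_ne_zero.mpr hu)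
    obtain ⟨g, hg⟩ := this (u := C u.leadingCoeff⁻¹ * u) (s := algebraMap K R u.leadingCoeff⁻¹ * s)
      (by simp [hroot.eq_zero]) (by simpa [hu] using hsimple) (I.mul_mem_left _ hs)
      (monic_C_mul_of_mul_leadingCoeff_eq_one (inv_mul_cancel₀ (leadingCoeff_ne_zero.mpr hu)))
    rw [map_mul, aeval_C] at hg
    exact ⟨g, ((IsUnit.mk0 _ hlead).map (algebraMap K R)).mul_left_cancel hg⟩
  nontriviality R
  have hdeg : 0 < u.degree := degree_pos_of_root hmonic.ne_zero hroot
  have hshift : (u.map (algebraMap K R) - C s).Monic :=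
    (hmonic.map _).sub_of_left (degree_C_le.trans_lt (by rwa [hmonic.degree_map]))
  obtain ⟨g, hg, -⟩ := HenselianRing.is_henselian (I := I) _ hshift (algebraMap K R a)
    (by simpa [eval_map_algebraMap, aeval_algebraMap_apply, hroot.eq_zero] using hs)
    (by
      have hunit : IsUnit (eval a (derivative u)) := IsUnit.mk0 _ hsimple
      simpa [derivative_map, eval_map_algebraMap, aeval_algebraMap_apply] using
        (hunit.map (algebraMap K R)).map (Ideal.Quotient.mk I))
  exact ⟨g, by simpa [sub_eq_zero, eval_map_algebraMap] using hg⟩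

theorem isIntegrallyClosedIn_of_algHom {K A : Type*} [Field K] [CommRing A] [IsDomain A]
    [Algebra K A] (ε : A →ₐ[K] K) : IsIntegrallyClosedIn K A := by
  refine isIntegrallyClosedIn_iff.mpr ⟨FaithfulSMul.algebraMap_injective K A, fun {z} hz ↦ ?_⟩
  have hroot : (minpoly K z).IsRoot (ε z) := by
    rw [IsRoot, ← coe_aeval_eq_eval, aeval_algHom_apply, minpoly.aeval, map_zero]
  exact minpoly.mem_range_of_degree_eq_one K z
    (degree_eq_one_of_irreducible_of_root (minpoly.irreducible hz) hroot)

theorem isIntegrallyClosedIn_trans (R A B : Type*) [CommRing R] [CommRing A] [CommRing B]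
    [Algebra R A] [Algebra A B] [Algebra R B] [IsScalarTower R A B]
    [IsIntegrallyClosedIn R A] [IsIntegrallyClosedIn A B] : IsIntegrallyClosedIn R B := by
  have hAB : Function.Injective (algebraMap A B) := IsIntegralClosure.algebraMap_injective A A B
  refine isIntegrallyClosedIn_iff.mpr ⟨?_, fun {z} hz ↦ ?_⟩
  · rw [IsScalarTower.algebraMap_eq R A B]
    exact hAB.comp (IsIntegralClosure.algebraMap_injective R R A)
  · obtain ⟨y, rfl⟩ := IsIntegrallyClosedIn.isIntegral_iff.mp (hz.tower_top (A := A))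
    obtain ⟨k, rfl⟩ :=
      IsIntegrallyClosedIn.isIntegral_iff.mp ((isIntegral_algebraMap_iff hAB).mp hz)
    exact ⟨k, IsScalarTower.algebraMap_apply R A B k⟩

theorem irreducible_X_pow_sub_C_of_mem_of_notMem_sq {R : Type*} [CommRing R] [IsDomain R]
    {P : Ideal R} (hP : P.IsPrime) {r : R} (hr : r ∈ P) (hr2 : r ∉ P ^ 2) {n : ℕ} (hn : n ≠ 0) :
    Irreducible (X ^ n - C r : R[X]) := by
  have hmonic : (X ^ n - C r).Monic := monic_X_pow_sub_C r hn
  refine (hmonic.isEisensteinAt_of_mem_of_notMem hP.ne_top (fun {k} hk ↦ ?_) ?_).irreducible hP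
    hmonic.isPrimitive (by rw [natDegree_X_pow_sub_C]; exact hn.bot_lt)
  · rw [natDegree_X_pow_sub_C] at hk
    rw [coeff_sub, coeff_X_pow, if_neg hk.ne, zero_sub, coeff_C]
    split_ifs <;> simp [hr]
  · simpa [coeff_X_pow, hn.symm] using hr2

section KummerExtension

open scoped PowerSeries

variable {K : Type*} [Field K] {u : K[X]} {a : K} {n : ℕ}

instance isIntegrallyClosedIn_powerSeries : IsIntegrallyClosedIn K K⟦X⟧ :=
  isIntegrallyClosedIn_of_algHom
    { PowerSeries.constantCoeff (R := K) with commutes' := fun k ↦ by simp }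

instance isIntegrallyClosedIn_fractionRing_powerSeries :
    IsIntegrallyClosedIn K (FractionRing K⟦X⟧) :=
  isIntegrallyClosedIn_trans K K⟦X⟧ (FractionRing K⟦X⟧)

theorem transcendental_of_aeval_eq_X_pow {g : K⟦X⟧} (hn : n ≠ 0)
    (hg : aeval g u = PowerSeries.X ^ n) : Transcendental K g := by
  intro halg
  obtain ⟨k, rfl⟩ := IsIntegrallyClosedIn.isIntegral_iff.mp halg.isIntegral
  have hconst : PowerSeries.C (eval k u) = (PowerSeries.X ^ n : K⟦X⟧) := by
    rw [← hg, aeval_algebraMap_apply, coe_aeval_eq_eval, PowerSeries.algebraMap_apply,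
      Algebra.algebraMap_self_apply]
  have hzero : eval k u = 0 := by simpa [hn] using congrArg PowerSeries.constantCoeff hconst
  rw [hzero, map_zero] at hconst
  exact pow_ne_zero n PowerSeries.X_ne_zero hconst.symm

theorem irreducible_X_pow_sub_C_algebraMap (hroot : u.IsRoot a)
    (hsimple : ¬(derivative u).IsRoot a) (hn : n ≠ 0) :
    Irreducible (X ^ n - C (algebraMap K[X] (RatFunc K) u)) := by
  have hsq : u ∉ Ideal.span {X - C a} ^ 2 := by
    rw [Ideal.span_singleton_pow, Ideal.mem_span_singleton]
    rintro ⟨v, rfl⟩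
    exact hsimple (by simp [derivative_mul, derivative_pow])
  have hirr := irreducible_X_pow_sub_C_of_mem_of_notMem_sq (n := n)
    ((Ideal.span_singleton_prime (X_sub_C_ne_zero a)).mpr (prime_X_sub_C a))
    (Ideal.mem_span_singleton.mpr (dvd_iff_isRoot.mpr hroot)) hsq hn
  simpa using ((monic_X_pow_sub_C u hn).irreducible_iff_irreducible_map_fraction_map
    (K := RatFunc K)).mp hirr

theorem nonempty_algHom_adjoinRoot_X_pow_sub_C {L : Type*} [Field L] [Algebra K L] {x y : L}
    (hx : Transcendental K x) (hxy : aeval x u = y ^ n) :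
    Nonempty (AdjoinRoot (X ^ n - C (algebraMap K[X] (RatFunc K) u)) →ₐ[K] L) := by
  have hinj : Function.Injective (aeval x : K[X] →ₐ[K] L) := transcendental_iff_injective.mp hx
  let φ : RatFunc K →ₐ[K] L := IsFractionRing.liftAlgHom hinj
  have hφ : φ (algebraMap K[X] (RatFunc K) u) = y ^ n :=
    (IsFractionRing.lift_algebraMap hinj u).trans hxy
  exact ⟨AdjoinRoot.liftAlgHom _ φ y (by
    simp only [eval₂_sub, eval₂_X_pow, eval₂_C, RingHom.coe_coe, hφ, sub_self])⟩

theorem isIntegrallyClosedIn_adjoinRoot_X_pow_sub_C (hroot : u.IsRoot a)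
    (hsimple : ¬(derivative u).IsRoot a) (hn : n ≠ 0) :
    IsIntegrallyClosedIn K (AdjoinRoot (X ^ n - C (algebraMap K[X] (RatFunc K) u))) := by
  obtain ⟨g, hg⟩ : ∃ g : K⟦X⟧, aeval g u = PowerSeries.X ^ n :=
    exists_aeval_eq_of_simple_root (I := Ideal.span {PowerSeries.X}) hroot hsimple
      (Ideal.pow_mem_of_mem _ (Ideal.mem_span_singleton_self _) n hn.bot_lt)
  have htrans : Transcendental K (algebraMap K⟦X⟧ (FractionRing K⟦X⟧) g) :=
    (transcendental_algebraMap_iff (IsFractionRing.injective _ _)).mpr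
      (transcendental_of_aeval_eq_X_pow hn hg)
  obtain ⟨ψ⟩ := nonempty_algHom_adjoinRoot_X_pow_sub_C (u := u) (n := n) htrans
    (by rw [aeval_algebraMap_apply, hg, map_pow])
  have := Fact.mk (irreducible_X_pow_sub_C_algebraMap hroot hsimple hn)
  exact ψ.isIntegrallyClosedIn ψ.injective inferInstance

end KummerExtension

theorem exists_simple_root_X_mul_quadratic {K : Type*} [Field K] {b c : K} (hbc : b ≠ 0 ∨ c ≠ 0) :
    ∃ a, (X * (X ^ 2 + C b * X + C c) : K[X]).IsRoot a ∧
      ¬(derivative (X * (X ^ 2 + C b * X + C c) : K[X])).IsRoot a := by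
  by_cases hc : c = 0
  · subst hc
    have hb : b ≠ 0 := by simpa using hbc
    refine ⟨-b, by simp [pow_two], fun h ↦ pow_ne_zero 2 hb ?_⟩
    simp only [IsRoot, derivative_mul, derivative_add, derivative_X, derivative_X_pow, derivative_C,
      eval_add, eval_mul, eval_pow, eval_X, eval_C, eval_one, eval_zero] at h
    linear_combination h
  · exact ⟨0, by simp, by simpa using hc⟩

theorem xfx_eq_algebraMap (K : Type*) [Field K] (b c : K) :
    xfx K b c = algebraMap K[X] (RatFunc K) (X * (X ^ 2 + C b * X + C c)) := by
  simp [xfx]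

theorem stmt_10_general (K : Type*) [Field K] (b c : K) (hbc : b ≠ 0 ∨ c ≠ 0) :
    (∀ z : AdjoinRoot (kummerPoly K b c), IsAlgebraic K z →
        z ∈ (algebraMap K (AdjoinRoot (kummerPoly K b c))).range) ∧
      integralClosure K (AdjoinRoot (kummerPoly K b c)) = ⊥ := by
  obtain ⟨a, hroot, hsimple⟩ := exists_simple_root_X_mul_quadratic hbc
  have hclosed : IsIntegrallyClosedIn K (AdjoinRoot (kummerPoly K b c)) := by
    rw [kummerPoly, xfx_eq_algebraMap]
    exact isIntegrallyClosedIn_adjoinRoot_X_pow_sub_C hroot hsimple three_ne_zero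
  exact ⟨fun z hz ↦ IsIntegrallyClosedIn.isIntegral_iff.mp hz.isIntegral,
    (IsIntegrallyClosedIn.integralClosure_eq_bot_iff _
      (IsIntegralClosure.algebraMap_injective K K _)).mpr hclosed⟩

/-- Let `𝔽_q` be a finite field with `q ≡ 1 (mod 3)`,
`f(T) = T² + bT + c` monic quadratic irreducible over `𝔽_q`, and
`F = 𝔽_q(x)[Y]/(Y³ − x·f(x))`.  Then `𝔽_q` is the full field of constants of `F`:
every element of `F` algebraic over `𝔽_q` lies in the canonical image of `𝔽_q`;
equivalently, the integral closure of `𝔽_q` in `F` is `𝔽_q`. -/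
theorem stmt_10 (Fq : Type*) [Field Fq] [Fintype Fq] (hq : Fintype.card Fq % 3 = 1)
    (b c : Fq) (hf : Irreducible (X ^ 2 + C b * X + C c : Polynomial Fq)) :
    (∀ z : AdjoinRoot (kummerPoly Fq b c), IsAlgebraic Fq z →
        z ∈ (algebraMap Fq (AdjoinRoot (kummerPoly Fq b c))).range) ∧
      integralClosure Fq (AdjoinRoot (kummerPoly Fq b c)) = ⊥ :=
  stmt_10_general Fq b c (by
    by_contra! h
    exact not_irreducible_pow (n := 2) (by norm_num) (by simpa [h] using hf))
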